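/- arXiv:2110.14173 — 2 statements merged into one kernel-verified Lean document; each statement's English description precedes it below -/
import Mathlib

section
/- Let f : ℝⁿ → ℝ be a positive Borel density such that for every y ∈ ℝⁿ the map x ↦ f(x+y)/f(x) is convex. Then f is a multivariate normal density; i.e., there exist a positive definite symmetric matrix A, b ∈ ℝⁿ, c ∈ ℝ with f(x) = exp(−(1/2)xᵀAx − bᵀx − c) for all x, so f is the Gaussian density with covariance A⁻¹ and mean −A⁻¹b. -/
/-!
Write `h = -log f`. Integrating the convex functions `x ↦ f (x + y) / f x` over `y` shows that
`1 / f` is convex (`convexOn_inv_of_ratio`); in particular it is locally Lipschitz, and so is `h`.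

Fix `v` and let `k x = h (x + v) + h (x - v) - 2 h x`. For small `y` put `W x = h (x + y) - h x`,
`a = W (x + v) - W x` and `b = W (x - v) - W x`, so that `k (x + y) - k x = a + b`. Midpoint
convexity of the ratio for the increments `y` and `-y` gives `2 ≤ exp (-a) + exp (-b)` and
`2 ≤ exp a + exp b`, hence `|a + b| ≤ a ^ 2 + b ^ 2`, and this is `O(‖y‖ ^ 2)` because `h` is locally
Lipschitz. Thus `k` has zero derivative everywhere and is constant (`secondDiff_const`).

A continuous function all of whose second differences are constant is a quadratic polynomial
(`quadratic_of_secondDiff_const`). Finally, if the quadratic form satisfied `B v v ≤ 0` for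
some `v ≠ 0`, then `2 f x ≤ f (x + t v) + f (x - t v)` for all `t`, by the inequality of arithmetic
and geometric means. So the mass of `f` in the unit ball would be at most its mass outside
arbitrarily large balls (`no_midpoint_spread`), which is impossible.
-/

open MeasureTheory Matrix

/-- The convexity inequality for `1 / f` is the one for `f (x + y) / f x` integrated over `y`. -/
theorem convexOn_inv_of_ratio {n : ℕ} (f : (Fin n → ℝ) → ℝ) (hint : ∫ x, f x = 1)
    (hconv : ∀ y : Fin n → ℝ, ConvexOn ℝ Set.univ (fun x => f (x + y) / f x)) :
    ConvexOn ℝ Set.univ (fun x => 1 / f x) := by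
  have hI : Integrable f := by
    by_contra hc
    rw [integral_undef hc] at hint
    exact zero_ne_one hint
  have hI' : ∀ x, Integrable (fun y => f (x + y) / f x) := fun x =>
    (hI.comp_add_left x).div_const _
  have hval : ∀ x, ∫ y, f (x + y) / f x = 1 / f x := by
    intro x
    rw [integral_div, integral_add_left_eq_self f x, hint]
  refine ⟨convex_univ, fun x _ z _ a b ha hb hab => ?_⟩
  simp only [smul_eq_mul]
  rw [← hval, ← hval x, ← hval z, ← integral_const_mul, ← integral_const_mul,
    ← integral_add ((hI' x).const_mul a) ((hI' z).const_mul b)]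
  refine integral_mono (hI' _) (((hI' x).const_mul a).add ((hI' z).const_mul b)) fun y => ?_
  exact (hconv y).2 (Set.mem_univ x) (Set.mem_univ z) ha hb hab

/-- `log f` is Lipschitz at each point, because the convex function `1 / f` is locally Lipschitz and
locally bounded away from zero. -/
theorem log_locally_lipschitz {n : ℕ} (f : (Fin n → ℝ) → ℝ) (hpos : ∀ x, 0 < f x)
    (hinv : ConvexOn ℝ Set.univ (fun x => 1 / f x)) (x : Fin n → ℝ) :
    ∃ L : ℝ, 0 ≤ L ∧ ∀ᶠ y in nhds (0 : Fin n → ℝ),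
      |Real.log (f (x + y)) - Real.log (f x)| ≤ L * ‖y‖ := by
  obtain ⟨K, t, ht, hK⟩ := hinv.locallyLipschitzOn isOpen_univ (Set.mem_univ x)
  rw [nhdsWithin_univ] at ht
  have hcont : ContinuousAt (fun x => 1 / f x) x := (hK.continuousOn).continuousAt ht
  have hxp : 0 < 1 / f x := one_div_pos.2 (hpos x)
  have hlow : ∀ᶠ z in nhds x, 1 / f x / 2 < 1 / f z :=
    hcont.eventually (lt_mem_nhds (half_lt_self hxp))
  have hxt : x ∈ t := mem_of_mem_nhds ht
  refine ⟨K / (1 / f x / 2), by positivity, ?_⟩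
  have htend : Filter.Tendsto (fun y => x + y) (nhds 0) (nhds x) := by
    have : ContinuousAt (fun y : Fin n → ℝ => x + y) 0 := by fun_prop
    simpa [ContinuousAt] using this
  filter_upwards [htend.eventually ht, htend.eventually hlow] with y hy1 hy2
  have hd := hK.dist_le_mul _ hy1 _ hxt
  rw [Real.dist_eq, dist_eq_norm, add_sub_cancel_left] at hd
  -- `log` is Lipschitz with constant `1 / m` on `(m, ∞)`
  have key : ∀ u w m : ℝ, 0 < m → m < u → m < w → |Real.log u - Real.log w| ≤ |u - w| / m := by
    have one : ∀ u w m : ℝ, 0 < m → m < u → m < w → Real.log u - Real.log w ≤ |u - w| / m := by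
      intro u w m hm hu hw
      have hu0 := hm.trans hu
      have hw0 := hm.trans hw
      rw [← Real.log_div hu0.ne' hw0.ne']
      calc Real.log (u / w) ≤ u / w - 1 := Real.log_le_sub_one_of_pos (by positivity)
        _ = (u - w) / w := by field_simp
        _ ≤ |u - w| / w := by gcongr; exact le_abs_self _
        _ ≤ |u - w| / m := by gcongr
    intro u w m hm hu hw
    rw [abs_le]
    have h1 := one u w m hm hu hw
    have h2 := one w u m hm hw hu
    rw [abs_sub_comm] at h2
    constructor <;> linarith
  have := key _ _ _ (half_pos hxp) hy2 (half_lt_self hxp)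
  simp only [one_div, Real.log_inv] at this
  have h3 : |Real.log (f (x + y)) - Real.log (f x)| =
      |-Real.log (f (x + y)) - -Real.log (f x)| := by
    rw [← abs_neg]; congr 1; ring
  rw [h3]
  refine this.trans ?_
  rw [div_mul_eq_mul_div]
  have hm : 0 ≤ (f x)⁻¹ / 2 := by have := hpos x; positivity
  simp only [one_div] at hd ⊢
  gcongr

theorem abs_add_le_of_exp {a b : ℝ} (ha : |a| ≤ 1) (hb : |b| ≤ 1)
    (h1 : 2 ≤ Real.exp a + Real.exp b) (h2 : 2 ≤ Real.exp (-a) + Real.exp (-b)) :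
    |a + b| ≤ a ^ 2 + b ^ 2 := by
  have e1 := abs_le.1 (Real.abs_exp_sub_one_sub_id_le ha)
  have e2 := abs_le.1 (Real.abs_exp_sub_one_sub_id_le hb)
  have e3 := abs_le.1 (Real.abs_exp_sub_one_sub_id_le (x := -a) (by rwa [abs_neg]))
  have e4 := abs_le.1 (Real.abs_exp_sub_one_sub_id_le (x := -b) (by rwa [abs_neg]))
  rw [neg_sq] at e3 e4
  rw [abs_le]
  constructor <;> linarith [e1.2, e2.2, e3.2, e4.2]

/-- Midpoint convexity of `x ↦ f (x + y) / f x` at `x ± v`, divided by its value at `x`. -/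
theorem two_le_exp_of_ratio {n : ℕ} (f : (Fin n → ℝ) → ℝ) (hpos : ∀ x, 0 < f x)
    (hconv : ∀ y : Fin n → ℝ, ConvexOn ℝ Set.univ (fun x => f (x + y) / f x))
    (x v y : Fin n → ℝ) :
    2 ≤ Real.exp ((Real.log (f (x + v + y)) - Real.log (f (x + v)))
          - (Real.log (f (x + y)) - Real.log (f x)))
      + Real.exp ((Real.log (f (x - v + y)) - Real.log (f (x - v)))
          - (Real.log (f (x + y)) - Real.log (f x))) := by
  have hhalf : (0 : ℝ) ≤ 1 / 2 := by norm_num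
  have h := (hconv y).2 (Set.mem_univ (x + v)) (Set.mem_univ (x - v)) hhalf hhalf (by norm_num)
  have hm : (1 / 2 : ℝ) • (x + v) + (1 / 2 : ℝ) • (x - v) = x := by
    ext i; simp; ring
  simp only [hm, smul_eq_mul] at h
  simp only [Real.exp_sub, Real.exp_log (hpos _)]
  rw [← add_div, le_div_iff₀ (div_pos (hpos _) (hpos _))]
  linarith

/-- The second differences of `log f` in a fixed direction `v` do not depend on the base point: their
increments are quadratically small, so their derivative vanishes. -/
theorem secondDiff_const {n : ℕ} (f : (Fin n → ℝ) → ℝ) (hpos : ∀ x, 0 < f x)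
    (hinv : ConvexOn ℝ Set.univ (fun x => 1 / f x))
    (hconv : ∀ y : Fin n → ℝ, ConvexOn ℝ Set.univ (fun x => f (x + y) / f x))
    (v x x' : Fin n → ℝ) :
    Real.log (f (x + v)) + Real.log (f (x - v)) - 2 * Real.log (f x) =
      Real.log (f (x' + v)) + Real.log (f (x' - v)) - 2 * Real.log (f x') := by
  set k : (Fin n → ℝ) → ℝ := fun x =>
    Real.log (f (x + v)) + Real.log (f (x - v)) - 2 * Real.log (f x) with hk
  have hder : ∀ x, HasFDerivAt k (0 : (Fin n → ℝ) →L[ℝ] ℝ) x := by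
    intro x
    rw [hasFDerivAt_iff_isLittleO_nhds_zero]
    obtain ⟨L₁, hL₁, h₁⟩ := log_locally_lipschitz f hpos hinv (x + v)
    obtain ⟨L₂, hL₂, h₂⟩ := log_locally_lipschitz f hpos hinv (x - v)
    obtain ⟨L₃, hL₃, h₃⟩ := log_locally_lipschitz f hpos hinv x
    set L := L₁ + L₂ + L₃ with hL
    have hL0 : 0 ≤ L := by positivity
    have hsmall : ∀ᶠ y in nhds (0 : Fin n → ℝ), L * ‖y‖ < 1 := by
      have : ContinuousAt (fun y : Fin n → ℝ => L * ‖y‖) 0 := by fun_prop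
      exact this.eventually (gt_mem_nhds (by simp))
    have hbig : (fun y => k (x + y) - k x - (0 : (Fin n → ℝ) →L[ℝ] ℝ) y)
        =O[nhds 0] fun y => ‖y‖ ^ 2 := by
      refine Asymptotics.IsBigO.of_bound (2 * L ^ 2) ?_
      filter_upwards [h₁, h₂, h₃, hsmall] with y h1 h2 h3 hs
      have hy := norm_nonneg y
      have hn1 := mul_nonneg hL₁ hy
      have hn2 := mul_nonneg hL₂ hy
      have hn3 := mul_nonneg hL₃ hy
      have hLy : L * ‖y‖ = L₁ * ‖y‖ + L₂ * ‖y‖ + L₃ * ‖y‖ := by rw [hL]; ring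
      set a := (Real.log (f (x + v + y)) - Real.log (f (x + v)))
          - (Real.log (f (x + y)) - Real.log (f x)) with ha
      set b := (Real.log (f (x - v + y)) - Real.log (f (x - v)))
          - (Real.log (f (x + y)) - Real.log (f x)) with hb
      have ha' : |a| ≤ L * ‖y‖ := by
        refine (abs_sub _ _).trans ?_
        linarith
      have hb' : |b| ≤ L * ‖y‖ := by
        refine (abs_sub _ _).trans ?_
        linarith
      have e1 : 2 ≤ Real.exp a + Real.exp b := two_le_exp_of_ratio f hpos hconv x v y
      -- the increment `-y` at the base point `x + y`
      have e2 : 2 ≤ Real.exp (-a) + Real.exp (-b) := by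
        have := two_le_exp_of_ratio f hpos hconv (x + y) v (-y)
        have t1 : x + y + v + -y = x + v := by abel
        have t2 : x + y - v + -y = x - v := by abel
        have t3 : x + y + -y = x := by abel
        have t4 : x + y + v = x + v + y := by abel
        have t5 : x + y - v = x - v + y := by abel
        rw [t1, t2, t3, t4, t5] at this
        convert this using 3 <;> simp only [ha, hb] <;> ring
      have hab := abs_add_le_of_exp (ha'.trans hs.le) (hb'.trans hs.le) e1 e2
      have hkab : k (x + y) - k x - (0 : (Fin n → ℝ) →L[ℝ] ℝ) y = a + b := by
        simp only [hk, ha, hb, _root_.zero_apply]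
        rw [show x + y + v = x + v + y by abel, show x + y - v = x - v + y by abel]
        ring
      rw [hkab, Real.norm_eq_abs, norm_pow, norm_norm]
      have q1 : a ^ 2 ≤ (L * ‖y‖) ^ 2 := sq_le_sq' (abs_le.1 ha').1 (abs_le.1 ha').2
      have q2 : b ^ 2 ≤ (L * ‖y‖) ^ 2 := sq_le_sq' (abs_le.1 hb').1 (abs_le.1 hb').2
      rw [mul_pow] at q1 q2
      linarith
    exact hbig.trans_isLittleO (Asymptotics.isLittleO_norm_pow_id one_lt_two)
  exact is_const_of_fderiv_eq_zero (fun z => (hder z).differentiableAt)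
    (fun z => (hder z).fderiv) x x'

/-- A continuous function whose second differences `h (x + v) + h (x - v) - 2 h x` do not depend on
`x` is a quadratic polynomial, given here by a symmetric bilinear form and a linear form. -/
theorem quadratic_of_secondDiff_const {n : ℕ} (h : (Fin n → ℝ) → ℝ) (hc : Continuous h)
    (hd : ∀ v x x', h (x + v) + h (x - v) - 2 * h x = h (x' + v) + h (x' - v) - 2 * h x') :
    ∃ (B : (Fin n → ℝ) →ₗ[ℝ] (Fin n → ℝ) →ₗ[ℝ] ℝ) (l : (Fin n → ℝ) →ₗ[ℝ] ℝ),
      (∀ x y, B x y = B y x) ∧ ∀ x, h x = 1 / 2 * B x x + l x + h 0 := by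
  set P : (Fin n → ℝ) → (Fin n → ℝ) → ℝ := fun v x => h (x + v) - h x - h v + h 0 with hP
  have hPsymm : ∀ v x, P v x = P x v := by
    intro v x
    simp only [hP]; rw [add_comm x v]; ring
  -- `P v` is midpoint affine, being a difference of two functions with the same second differences
  have hPmid : ∀ v x w, P v (x + w) + P v (x - w) = 2 * P v x := by
    intro v x w
    have := hd w (x + v) x
    simp only [hP]
    rw [show x + w + v = x + v + w by abel, show x - w + v = x + v - w by abel]
    linarith
  have hP0 : ∀ v, P v 0 = 0 := by intro v; simp [hP]
  have hadd_of_mid : ∀ p : (Fin n → ℝ) → ℝ, p 0 = 0 →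
      (∀ x w, p (x + w) + p (x - w) = 2 * p x) → ∀ x y, p (x + y) = p x + p y := by
    intro p p0 hp x y
    have hdouble : ∀ z, p (z + z) = 2 * p z := by
      intro z
      have := hp z z
      rw [sub_self, p0] at this
      linarith
    have h1 := hp ((1 / 2 : ℝ) • (x + y)) ((1 / 2 : ℝ) • (x - y))
    have h2 := hdouble ((1 / 2 : ℝ) • (x + y))
    rw [show (1 / 2 : ℝ) • (x + y) + (1 / 2 : ℝ) • (x - y) = x by ext i; simp; ring,
      show (1 / 2 : ℝ) • (x + y) - (1 / 2 : ℝ) • (x - y) = y by ext i; simp; ring] at h1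
    rw [show (1 / 2 : ℝ) • (x + y) + (1 / 2 : ℝ) • (x + y) = x + y by ext i; simp; ring] at h2
    linarith
  have hPadd : ∀ v x y, P v (x + y) = P v x + P v y := fun v =>
    hadd_of_mid (P v) (hP0 v) (hPmid v)
  have hPcont : ∀ v, Continuous (P v) := by
    intro v; simp only [hP]; fun_prop
  have hPsmul : ∀ v (r : ℝ) x, P v (r • x) = r * P v x := by
    intro v r x
    exact map_smul ((AddMonoidHom.mk' (P v) (hPadd v)).toRealLinearMap (hPcont v)) r x
  set B : (Fin n → ℝ) →ₗ[ℝ] (Fin n → ℝ) →ₗ[ℝ] ℝ := LinearMap.mk₂ ℝ P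
    (fun v w x => by rw [hPsymm, hPadd, hPsymm x v, hPsymm x w])
    (fun r v x => by rw [hPsymm, hPsmul, hPsymm x v, smul_eq_mul])
    hPadd (fun r v x => by rw [hPsmul, smul_eq_mul]) with hB
  set q : (Fin n → ℝ) → ℝ := fun x => h x - h 0 - 1 / 2 * P x x with hq
  have hqadd : ∀ x y, q (x + y) = q x + q y := by
    intro x y
    have e : h (x + y) = P y x + h x + h y - h 0 := by simp only [hP]; ring
    simp only [hq]
    rw [hPadd, hPsymm (x + y) x, hPsymm (x + y) y, hPadd, hPadd, hPsymm x y, e]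
    ring
  have hqcont : Continuous q := by simp only [hq, hP]; fun_prop
  refine ⟨B, ((AddMonoidHom.mk' q hqadd).toRealLinearMap hqcont).toLinearMap, ?_, ?_⟩
  · intro x y; exact hPsymm x y
  · intro x
    have : B x x = P x x := rfl
    simp only [ContinuousLinearMap.coe_coe, AddMonoidHom.coe_toRealLinearMap,
      AddMonoidHom.mk'_apply, this, hq]
    ring

/-- A positive integrable function cannot be bounded by the average of its values at `x ± t • v` for
all `t`: integrating over the unit ball with `t` large, that ball would have at most the mass of
`{x | k ≤ ‖x‖}` for every `k`, and this tends to zero. -/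
theorem no_midpoint_spread {n : ℕ} (f : (Fin n → ℝ) → ℝ) (hI : Integrable f)
    (hpos : ∀ x, 0 < f x) (v : Fin n → ℝ) (hv : v ≠ 0)
    (hle : ∀ (t : ℝ) (x : Fin n → ℝ), 2 * f x ≤ f (x + t • v) + f (x + (-t) • v)) : False := by
  set S : ℕ → Set (Fin n → ℝ) := fun k => {x | (k : ℝ) ≤ ‖x‖} with hS
  have hSm : ∀ k, MeasurableSet (S k) := fun k =>
    measurableSet_le measurable_const measurable_norm
  have hSanti : Antitone S := by
    intro i j hij x hx
    have : (i : ℝ) ≤ j := by exact_mod_cast hij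
    exact this.trans hx
  have hSempty : ⋂ k, S k = ∅ := by
    ext x
    simp only [Set.mem_iInter, Set.mem_empty_iff_false, iff_false, not_forall]
    obtain ⟨k, hk⟩ := exists_nat_gt ‖x‖
    exact ⟨k, not_le.2 hk⟩
  have hlim := tendsto_setIntegral_of_antitone (μ := volume) (f := f) hSm hSanti
    ⟨0, hI.integrableOn⟩
  rw [hSempty, setIntegral_empty] at hlim
  have hball : 0 < ∫ x in Metric.ball (0 : Fin n → ℝ) 1, f x := by
    rw [setIntegral_pos_iff_support_of_nonneg_ae (Filter.Eventually.of_forall fun x => (hpos x).le)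
      hI.integrableOn]
    have : Function.support f = Set.univ := by
      ext x; simp [(hpos x).ne']
    rw [this, Set.univ_inter]
    exact Metric.measure_ball_pos _ _ one_pos
  refine absurd (ge_of_tendsto' hlim fun k => ?_) (not_le.2 hball)
  have hvn : 0 < ‖v‖ := norm_pos_iff.2 hv
  set t : ℝ := (k + 1) / ‖v‖ with ht
  have htv : ∀ s : ℝ, |s| = t → ‖s • v‖ = k + 1 := by
    intro s hs
    rw [norm_smul, Real.norm_eq_abs, hs, ht, div_mul_cancel₀ _ hvn.ne']
  have ht0 : 0 ≤ t := by positivity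
  set g := (S k).indicator f with hg
  have hgI : Integrable g := hI.indicator (hSm k)
  have hg0 : ∀ x, 0 ≤ g x := fun x => Set.indicator_nonneg (fun y _ => (hpos y).le) x
  have hmem : ∀ s : ℝ, |s| = t → ∀ x ∈ Metric.ball (0 : Fin n → ℝ) 1, x + s • v ∈ S k := by
    intro s hs x hx
    rw [mem_ball_zero_iff] at hx
    have h1 := htv s hs
    have h2 := norm_sub_le (x + s • v) x
    rw [add_sub_cancel_left] at h2
    show (k : ℝ) ≤ ‖x + s • v‖
    linarith
  rw [← integral_indicator measurableSet_ball, ← integral_indicator (hSm k)]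
  have hsum : ∫ x, 1 / 2 * (g (x + t • v) + g (x + (-t) • v)) = ∫ x, g x := by
    rw [integral_const_mul, integral_add (hgI.comp_add_right _) (hgI.comp_add_right _),
      integral_add_right_eq_self g, integral_add_right_eq_self g]
    ring
  rw [← hsum]
  refine integral_mono (hI.indicator measurableSet_ball)
    (((hgI.comp_add_right _).add (hgI.comp_add_right _)).const_mul _) fun x => ?_
  by_cases hx : x ∈ Metric.ball (0 : Fin n → ℝ) 1
  · have m1 := hmem t (abs_of_nonneg ht0) x hx
    have m2 := hmem (-t) (by rw [abs_neg, abs_of_nonneg ht0]) x hx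
    simp only [hg, Set.indicator_of_mem hx, Set.indicator_of_mem m1, Set.indicator_of_mem m2]
    linarith [hle t x]
  · simp only [Set.indicator_of_notMem hx]
    have := hg0 (x + t • v)
    have := hg0 (x + (-t) • v)
    positivity

theorem stmt9 {n : ℕ} (f : (Fin n → ℝ) → ℝ)
    (hmeas : Measurable f) (hpos : ∀ x, 0 < f x)
    (hint : ∫ x, f x = 1)
    (hconv : ∀ y : Fin n → ℝ, ConvexOn ℝ Set.univ (fun x => f (x + y) / f x)) :
    ∃ (A : Matrix (Fin n) (Fin n) ℝ) (b : Fin n → ℝ) (c : ℝ),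
      A.PosDef ∧
      ∀ x, f x = Real.exp (-((1 / 2) * (x ⬝ᵥ (A *ᵥ x))) - b ⬝ᵥ x - c) := by
  have hI : Integrable f := by
    by_contra hc
    rw [integral_undef hc] at hint
    exact zero_ne_one hint
  have hinv := convexOn_inv_of_ratio f hint hconv
  have hcinv : Continuous fun x => 1 / f x :=
    continuousOn_univ.1 (hinv.continuousOn isOpen_univ)
  have hcont : Continuous fun x => -Real.log (f x) := by
    have := hcinv.log fun x => (one_div_pos.2 (hpos x)).ne'
    simpa only [one_div, Real.log_inv] using this
  obtain ⟨B, l, hsymm, hB⟩ := quadratic_of_secondDiff_const _ hcont fun v x x' => by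
    linarith [secondDiff_const f hpos hinv hconv v x x']
  have hf : ∀ x, f x = Real.exp (-(1 / 2 * B x x) - l x - -Real.log (f 0)) := by
    intro x
    have e : -(1 / 2 * B x x) - l x - -Real.log (f 0) = Real.log (f x) := by linarith [hB x]
    rw [e, Real.exp_log (hpos x)]
  have hBpos : ∀ v, v ≠ 0 → 0 < B v v := by
    intro v hv
    by_contra! hneg
    refine no_midpoint_spread f hI hpos v hv fun t x => ?_
    -- the exponents at `x ± t v` average to the exponent at `x` plus `- t ^ 2 * B v v / 2 ≥ 0`
    rw [hf x, hf (x + t • v), hf (x + (-t) • v)]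
    simp only [map_add, map_smul, LinearMap.add_apply, LinearMap.smul_apply, smul_eq_mul]
    rw [hsymm v x]
    set p := -(1 / 2 * (B x x + t * B x v + t * (B x v + t * B v v))) - (l x + t * l v)
      - -Real.log (f 0) with hp
    have hamgm : ∀ p q r : ℝ, 2 * r ≤ p + q → 2 * Real.exp r ≤ Real.exp p + Real.exp q := by
      intro p q r hr
      have h1 : Real.exp r ≤ Real.exp (p / 2) * Real.exp (q / 2) := by
        rw [← Real.exp_add, Real.exp_le_exp]; linarith
      have h2 : Real.exp p = Real.exp (p / 2) ^ 2 := by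
        rw [← Real.exp_nat_mul]; congr 1; push_cast; ring
      have h3 : Real.exp q = Real.exp (q / 2) ^ 2 := by
        rw [← Real.exp_nat_mul]; congr 1; push_cast; ring
      rw [h2, h3]
      nlinarith [sq_nonneg (Real.exp (p / 2) - Real.exp (q / 2))]
    apply hamgm
    nlinarith [mul_nonneg (sq_nonneg t) (neg_nonneg.2 hneg)]
  set A := LinearMap.toMatrix₂' ℝ B with hA
  have hAB : ∀ x y, x ⬝ᵥ (A *ᵥ y) = B x y := by
    intro x y
    rw [← Matrix.toLinearMap₂'_apply', hA, Matrix.toLinearMap₂'_toMatrix']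
  refine ⟨A, fun i => l (Pi.single i 1), -Real.log (f 0), ?_, ?_⟩
  · refine .of_dotProduct_mulVec_pos ?_ fun v hv => ?_
    · ext i j
      simp [hA, LinearMap.toMatrix₂'_apply, hsymm (Pi.single j 1) (Pi.single i 1)]
    · rw [star_trivial, hAB]
      exact hBpos v hv
  · intro x
    have hl : (fun i => l (Pi.single i 1)) ⬝ᵥ x = l x := by
      rw [LinearMap.pi_apply_eq_sum_univ l x]
      simp only [dotProduct, smul_eq_mul]
      refine Finset.sum_congr rfl fun i _ => ?_
      rw [mul_comm]
      congr 2
      ext j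
      simp [Pi.single_apply, eq_comm]
    rw [hAB, hl]
    exact hf x
end

section
/- A positive density f on ℝⁿ satisfies that for all θ₀, θ₁ ∈ ℝⁿ the likelihood ratio x ↦ f(x−θ₁)/f(x−θ₀) is convex if and only if f is a multivariate normal density with positive definite covariance. -/
/-!
The reverse implication holds because a likelihood ratio of two translates of a normal density is
the exponential of an affine function.

For the forward implication write `R_y x = f (x + y) / f x` and `g = log f`. Averaging the convexity
inequality of `R_y` over `y` shows that `1 / f` is convex (`convexOn_inv`), so `g` is continuous.
Moreover `R_y` is convex and so is its reciprocal, a translate of `R_{-y}`. With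
`α = Δ_u Δ_v g x` and `β = Δ_u Δ_v g (x + u)`, midpoint convexity of the two functions reads
`2 ≤ exp (-α) + exp β` and `2 ≤ exp α + exp (-β)`, whence `|β - α| ≤ α² + β²` as soon as
`|α|, |β| ≤ 1` (`adjacent`): third differences of `g` are quadratically small in second differences.

This self-improves (`cell_eq`). On a fixed two-dimensional parallelogram let `d k` be the largest
mixed difference over cells of side `2⁻ᵏ`. Uniform continuity gives `d k → 0`. A cell of side
`2⁻ᵏ` consists of four nearly equal cells of side `2⁻ᵏ⁻¹`, so `d (k + 1) ≤ d k / 3` eventually, and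
adjacent cells at level `k` differ by `O(9⁻ᵏ)`. The third difference at unit scale is a sum of
`O(8ᵏ)` differences of that kind, so it vanishes.

A continuous function with vanishing third differences is a quadratic polynomial
(`exists_quadratic`). Integrability forces its quadratic part to be negative definite: otherwise
`f (x + k v) + f (x - k v) ≥ 2 f x` for some `v ≠ 0` and all `k`, although the mass of `f` on a ball
translated by `± k v` tends to `0` (`posDef_of_integrable`). Completing the square and evaluating
the Gaussian integral identifies the mean, the covariance and the constant (`eq_gaussian`).
-/

open MeasureTheory Matrix

/-- The multivariate normal density with mean `μ` and covariance `S`. -/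
noncomputable def gaussianDensityFun {n : ℕ} (μ : Fin n → ℝ)
    (S : Matrix (Fin n) (Fin n) ℝ) (x : Fin n → ℝ) : ℝ :=
  (Real.sqrt ((2 * Real.pi) ^ n * S.det))⁻¹ *
    Real.exp (-((1 / 2) * ((x - μ) ⬝ᵥ (S⁻¹ *ᵥ (x - μ)))))

/-! ### Self-improvement of mixed differences in the plane -/

/-- The mixed second difference of `G` over the rectangle `[s, s + h] × [r, r + l]`. -/
def cell (G : ℝ → ℝ → ℝ) (s r h l : ℝ) : ℝ :=
  G (s + h) (r + l) - G (s + h) r - G s (r + l) + G s r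

/-- If adjacent cells differ by at most the sum of their squares, two small ones with sum
at most `D` in absolute value are each at most `11 / 20 * D`, slightly more than `D / 2`. -/
lemma half_bound {a b D : ℝ} (ha : |a| ≤ 1 / 10) (hb : |b| ≤ 1 / 10)
    (hab : |b - a| ≤ a ^ 2 + b ^ 2) (hD : |a + b| ≤ D) :
    |a| ≤ 11 / 20 * D ∧ |b| ≤ 11 / 20 * D := by
  have h1 : a ^ 2 ≤ 1 / 10 * |a| := by
    rw [← sq_abs]; nlinarith [abs_nonneg a]
  have h2 : b ^ 2 ≤ 1 / 10 * |b| := by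
    rw [← sq_abs]; nlinarith [abs_nonneg b]
  have h3 := hab.trans (add_le_add h1 h2)
  rw [abs_le] at h3 hD
  rcases abs_cases a with ⟨e, _⟩ | ⟨e, _⟩ <;> rcases abs_cases b with ⟨e', _⟩ | ⟨e', _⟩ <;>
    constructor <;> linarith

/-- Here `c s` stands for a cell over `[s, s + h]`, and `c s + c (s + h)` for the cell over
`[s, s + 2 h]`. A bound `D` for the long cells gives the bound `11 / 20 * D` for the short ones,
provided the latter are small and adjacent ones differ by at most the sum of their squares. -/
lemma halve (c : ℝ → ℝ) (h D : ℝ) (h0 : 0 < h) (h4 : h ≤ 1 / 4)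
    (hs : ∀ s, 0 ≤ s → s + h ≤ 1 → |c s| ≤ 1 / 10)
    (hadj : ∀ s, 0 ≤ s → s + 2 * h ≤ 1 → |c (s + h) - c s| ≤ c s ^ 2 + c (s + h) ^ 2)
    (hD : ∀ s, 0 ≤ s → s + 2 * h ≤ 1 → |c s + c (s + h)| ≤ D) :
    ∀ s, 0 ≤ s → s + h ≤ 1 → |c s| ≤ 11 / 20 * D := by
  intro s h1 h2
  -- use the doubled interval to the right of `s` if it fits, and the one to the left otherwise
  rcases le_total (s + 2 * h) 1 with h3 | h3
  · exact (half_bound (hs s h1 h2) (hs (s + h) (by linarith) (by linarith))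
      (hadj s h1 h3) (hD s h1 h3)).1
  · have e : s - h + h = s := by ring
    have := (half_bound (hs (s - h) (by linarith) (by linarith)) (hs (s - h + h)
      (by linarith) (by linarith))
      (hadj (s - h) (by linarith) (by linarith)) (hD (s - h) (by linarith) (by linarith))).2
    rwa [e] at this

/-- If adjacent small cells of a continuous `G`, in either direction, differ by at most the sum of
their squares, then the lower left quarter of the unit square and its right neighbour have equal
cells. -/
theorem cell_eq (G : ℝ → ℝ → ℝ) (hG : Continuous fun p : ℝ × ℝ => G p.1 p.2)
    (H1 : ∀ s r h l, |cell G s r h l| ≤ 1 → |cell G (s + h) r h l| ≤ 1 →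
      |cell G (s + h) r h l - cell G s r h l| ≤ cell G s r h l ^ 2 + cell G (s + h) r h l ^ 2)
    (H2 : ∀ s r h l, |cell G s r h l| ≤ 1 → |cell G s (r + l) h l| ≤ 1 →
      |cell G s (r + l) h l - cell G s r h l| ≤ cell G s r h l ^ 2 + cell G s (r + l) h l ^ 2) :
    cell G (1 / 2) 0 (1 / 2) (1 / 2) = cell G 0 0 (1 / 2) (1 / 2) := by
  -- uniform continuity on the unit square makes all thin cells small
  obtain ⟨δ, δ0, hδ⟩ : ∃ δ > 0, ∀ s r h l, 0 ≤ s → 0 ≤ r → s + h ≤ 1 → r + l ≤ 1 →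
      0 < h → 0 < l → h < δ → |cell G s r h l| ≤ 1 / 10 := by
    have hc : IsCompact (Set.Icc (0 : ℝ) 1 ×ˢ Set.Icc (0 : ℝ) 1) := isCompact_Icc.prod isCompact_Icc
    have hu := hc.uniformContinuousOn_of_continuous hG.continuousOn
    rw [Metric.uniformContinuousOn_iff] at hu
    obtain ⟨δ, δ0, hδ⟩ := hu (1 / 20) (by norm_num)
    refine ⟨δ, δ0, fun s r h l hs hr hsh hrl h0 l0 hhδ => ?_⟩
    have a1 := hδ (s + h, r + l) ⟨⟨by simp; linarith, hsh⟩, ⟨by simp; linarith, hrl⟩⟩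
      (s, r + l) ⟨⟨hs, by simp; linarith⟩, ⟨by simp; linarith, hrl⟩⟩
      (by simp [Prod.dist_eq, abs_of_pos h0, hhδ, δ0])
    have a2 := hδ (s + h, r) ⟨⟨by simp; linarith, hsh⟩, ⟨hr, by simp; linarith⟩⟩
      (s, r) ⟨⟨hs, by simp; linarith⟩, ⟨hr, by simp; linarith⟩⟩
      (by simp [Prod.dist_eq, abs_of_pos h0, hhδ, δ0])
    simp only [Real.dist_eq, abs_lt] at a1 a2
    rw [cell, abs_le]
    constructor <;> linarith
  obtain ⟨m, hm⟩ : ∃ m : ℕ, (1 / 2 : ℝ) ^ m < min δ (1 / 4) :=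
    exists_pow_lt_of_lt_one (by positivity) (by norm_num)
  obtain ⟨hmδ, hm4⟩ := lt_min_iff.1 hm
  have hle : ∀ k : ℕ, (1 / 2 : ℝ) ^ (m + k) ≤ (1 / 2) ^ m := fun k =>
    pow_le_pow_of_le_one (by norm_num) (by norm_num) (by omega)
  have hpos : ∀ k : ℕ, (0 : ℝ) < (1 / 2) ^ k := fun k => by positivity
  -- halving both side lengths divides the largest cell by more than `3`
  have hdec : ∀ k : ℕ, ∀ s r, 0 ≤ s → 0 ≤ r → s + (1 / 2 : ℝ) ^ (m + k) ≤ 1 →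
      r + (1 / 2 : ℝ) ^ (m + k) ≤ 1 →
      |cell G s r ((1 / 2) ^ (m + k)) ((1 / 2) ^ (m + k))| ≤ 1 / 10 * (1 / 3) ^ k := by
    intro k
    induction k with
    | zero =>
      intro s r hs hr hsh hrl
      simpa using hδ s r _ _ hs hr hsh hrl (hpos _) (hpos _) hmδ
    | succ k ih =>
      have e : (1 / 2 : ℝ) ^ (m + k) = 2 * (1 / 2) ^ (m + (k + 1)) := by
        rw [← add_assoc, pow_succ]; ring
      have hl := hle (k + 1)
      have hp := hpos (m + (k + 1))
      have hlk := hle k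
      rw [e] at ih hlk
      generalize (1 / 2 : ℝ) ^ (m + (k + 1)) = h at *
      have step1 : ∀ r, 0 ≤ r → r + 2 * h ≤ 1 → ∀ s, 0 ≤ s → s + h ≤ 1 →
          |cell G s r h (2 * h)| ≤ 11 / 20 * (1 / 10 * (1 / 3) ^ k) := by
        intro r hr hrl
        have sm : ∀ s, 0 ≤ s → s + h ≤ 1 → |cell G s r h (2 * h)| ≤ 1 / 10 := fun s hs hsh =>
          hδ s r _ _ hs hr hsh hrl hp (by linarith) (by linarith)
        refine halve (fun s => cell G s r h (2 * h)) h _ hp (by linarith) sm ?_ ?_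
        · intro s hs hsh
          exact H1 _ _ _ _ ((sm s hs (by linarith)).trans (by norm_num))
            ((sm (s + h) (by linarith) (by linarith)).trans (by norm_num))
        · intro s hs hsh
          have := ih s r hs hr hsh hrl
          convert this using 2
          have e1 : s + h + h = s + 2 * h := by ring
          simp only [cell, e1]; ring
      intro s r hs hr hsh hrl
      have sm : ∀ r, 0 ≤ r → r + h ≤ 1 → |cell G s r h h| ≤ 1 / 10 := fun r hr hrl =>
        hδ s r _ _ hs hr hsh hrl hp hp (by linarith)
      have := halve (fun r => cell G s r h h) h (11 / 20 * (1 / 10 * (1 / 3) ^ k)) hp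
        (by linarith) sm ?_ ?_ r hr hrl
      · refine this.trans ?_
        rw [pow_succ]
        have : (0 : ℝ) < (1 / 3) ^ k := by positivity
        linarith
      · intro r hr hrl
        exact H2 _ _ _ _ ((sm r hr (by linarith)).trans (by norm_num))
          ((sm (r + h) (by linarith) (by linarith)).trans (by norm_num))
      · intro r hr hrl
        have := step1 r hr hrl s hs hsh
        convert this using 2
        have e1 : r + h + h = r + 2 * h := by ring
        simp only [cell, e1]; ring
  -- hence adjacent cells at level `k` differ by `O(9⁻ᵏ)`
  have hadj : ∀ k : ℕ, ∀ s r, 0 ≤ s → 0 ≤ r → s + 2 * (1 / 2 : ℝ) ^ (m + k) ≤ 1 →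
      r + (1 / 2 : ℝ) ^ (m + k) ≤ 1 →
      |cell G (s + (1 / 2) ^ (m + k)) r ((1 / 2) ^ (m + k)) ((1 / 2) ^ (m + k)) -
        cell G s r ((1 / 2) ^ (m + k)) ((1 / 2) ^ (m + k))| ≤ (1 / 9) ^ k := by
    intro k s r hs hr hsh hrl
    have d := hdec k
    have hp := hpos (m + k)
    generalize (1 / 2 : ℝ) ^ (m + k) = h at *
    have d1 := d s r hs hr (by linarith) hrl
    have d2 := d (s + h) r (by linarith) hr (by linarith) hrl
    have q : (1 / 3 : ℝ) ^ k ≤ 1 := pow_le_one₀ (by norm_num) (by norm_num)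
    have q0 : (0 : ℝ) < (1 / 3) ^ k := by positivity
    have q9 : (1 / 9 : ℝ) ^ k = ((1 / 3) ^ k) ^ 2 := by
      rw [← pow_mul, mul_comm, pow_mul]; norm_num
    refine (H1 s r h h (d1.trans (by linarith)) (d2.trans (by linarith))).trans ?_
    have s1 := pow_le_pow_left₀ (abs_nonneg _) d1 2
    have s2 := pow_le_pow_left₀ (abs_nonneg _) d2 2
    rw [sq_abs] at s1 s2
    rw [q9]
    nlinarith [sq_nonneg ((1 / 3 : ℝ) ^ k)]
  -- the difference of two adjacent doubled cells is a sum of eight differences of adjacent cells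
  have hdouble : ∀ h E : ℝ, 0 < h → (∀ s r, 0 ≤ s → 0 ≤ r → s + 2 * h ≤ 1 → r + h ≤ 1 →
      |cell G (s + h) r h h - cell G s r h h| ≤ E) →
      ∀ s r, 0 ≤ s → 0 ≤ r → s + 2 * (2 * h) ≤ 1 → r + 2 * h ≤ 1 →
      |cell G (s + 2 * h) r (2 * h) (2 * h) - cell G s r (2 * h) (2 * h)| ≤ 8 * E := by
    intro h E h0 hE s r hs hr hsh hrl
    have a1 := hE s r hs hr (by linarith) (by linarith)
    have a2 := hE (s + h) r (by linarith) hr (by linarith) (by linarith)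
    have a3 := hE (s + 2 * h) r (by linarith) hr (by linarith) (by linarith)
    have b1 := hE s (r + h) hs (by linarith) (by linarith) (by linarith)
    have b2 := hE (s + h) (r + h) (by linarith) (by linarith) (by linarith) (by linarith)
    have b3 := hE (s + 2 * h) (r + h) (by linarith) (by linarith) (by linarith) (by linarith)
    have e1 : s + h + h = s + 2 * h := by ring
    have e2 : s + 2 * h + h = s + 3 * h := by ring
    have e3 : s + 3 * h + h = s + 4 * h := by ring
    have e4 : s + 2 * h + 2 * h = s + 4 * h := by ring
    have e5 : r + h + h = r + 2 * h := by ring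
    simp only [cell, e1, e2, e3, e4, e5, abs_le] at *
    constructor <;> linarith
  have hup : ∀ j : ℕ, ∀ h E : ℝ, 0 < h → (∀ s r, 0 ≤ s → 0 ≤ r → s + 2 * h ≤ 1 → r + h ≤ 1 →
      |cell G (s + h) r h h - cell G s r h h| ≤ E) →
      ∀ s r, 0 ≤ s → 0 ≤ r → s + 2 * (2 ^ j * h) ≤ 1 → r + 2 ^ j * h ≤ 1 →
      |cell G (s + 2 ^ j * h) r (2 ^ j * h) (2 ^ j * h) -
        cell G s r (2 ^ j * h) (2 ^ j * h)| ≤ 8 ^ j * E := by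
    intro j
    induction j with
    | zero => intro h E _ hE; simpa using hE
    | succ j ih =>
      intro h E h0 hE
      have := ih (2 * h) (8 * E) (by linarith) (hdouble h E h0 hE)
      have e1 : (2 : ℝ) ^ (j + 1) * h = 2 ^ j * (2 * h) := by ring
      have e2 : (8 : ℝ) ^ (j + 1) * E = 8 ^ j * (8 * E) := by ring
      rwa [e1, e2]
  have m1 : 1 ≤ m := by
    rcases Nat.eq_zero_or_pos m with h | h
    · subst h; norm_num at hm4
    · exact h
  have hfin : ∀ k : ℕ, |cell G (1 / 2) 0 (1 / 2) (1 / 2) - cell G 0 0 (1 / 2) (1 / 2)| ≤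
      8 ^ (m - 1) * (8 / 9) ^ k := by
    intro k
    have e : (2 : ℝ) ^ (m - 1 + k) * (1 / 2) ^ (m + k) = 1 / 2 := by
      obtain ⟨p, rfl⟩ : ∃ p, m = p + 1 := ⟨m - 1, by omega⟩
      have : p + 1 + k = (p + k) + 1 := by ring
      rw [this, pow_succ, ← mul_assoc, Nat.add_sub_cancel, ← mul_pow]
      norm_num
    have := hup (m - 1 + k) _ _ (hpos (m + k)) (hadj k) 0 0 le_rfl le_rfl
    rw [e] at this
    have := this (by norm_num) (by norm_num)
    rw [zero_add] at this
    refine this.trans_eq ?_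
    rw [pow_add, mul_assoc, ← mul_pow]; norm_num
  have hlim : Filter.Tendsto (fun k : ℕ => (8 : ℝ) ^ (m - 1) * (8 / 9) ^ k) Filter.atTop
      (nhds (8 ^ (m - 1) * 0)) :=
    (tendsto_pow_atTop_nhds_zero_of_lt_one (by norm_num) (by norm_num)).const_mul _
  rw [mul_zero] at hlim
  have := ge_of_tendsto' hlim hfin
  exact sub_eq_zero.1 (abs_nonpos_iff.1 this)

/-! ### The logarithm of the density is quadratic -/

/-- The mixed second difference of `g` at `x` with increments `u` and `v`. -/
def mixedDiff {E : Type*} [AddCommGroup E] (g : E → ℝ) (u v x : E) : ℝ :=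
  g (x + u + v) - g (x + u) - g (x + v) + g x

lemma mixedDiff_comm {E : Type*} [AddCommGroup E] (g : E → ℝ) (u v x : E) :
    mixedDiff g u v x = mixedDiff g v u x := by
  simp only [mixedDiff, add_right_comm x u v]; ring

/-- Midpoint convexity of `f (· + v) / f` on `x, x + u, x + 2 u`, written multiplicatively. -/
lemma midpoint_ratio {E : Type*} [AddCommGroup E] [Module ℝ E] {f : E → ℝ}
    (hf : ∀ x, 0 < f x)
    (hR : ∀ y, ConvexOn ℝ Set.univ fun x => f (x + y) / f x) (x u v : E) :
    2 ≤ Real.exp (-mixedDiff (fun x => Real.log (f x)) u v x) +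
      Real.exp (mixedDiff (fun x => Real.log (f x)) u v (x + u)) := by
  have h := (hR v).2 (Set.mem_univ x) (Set.mem_univ (x + u + u))
    (show (0 : ℝ) ≤ 1 / 2 by norm_num) (show (0 : ℝ) ≤ 1 / 2 by norm_num) (by norm_num)
  have e : (1 / 2 : ℝ) • x + (1 / 2 : ℝ) • (x + u + u) = x + u := by module
  simp only [e, smul_eq_mul] at h
  have p0 := hf x
  have p1 := hf (x + u)
  have p2 := hf (x + u + u)
  have q0 := hf (x + v)
  have q1 := hf (x + u + v)
  have q2 := hf (x + u + u + v)
  have e1 : Real.exp (-mixedDiff (fun x => Real.log (f x)) u v x) =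
      (f (x + v) / f x) / (f (x + u + v) / f (x + u)) := by
    have : -mixedDiff (fun x => Real.log (f x)) u v x =
        (Real.log (f (x + v)) - Real.log (f x)) -
          (Real.log (f (x + u + v)) - Real.log (f (x + u))) := by
      simp only [mixedDiff]; ring
    rw [this, Real.exp_sub, Real.exp_sub, Real.exp_sub]
    simp only [Real.exp_log, p0, p1, q0, q1]
  have e2 : Real.exp (mixedDiff (fun x => Real.log (f x)) u v (x + u)) =
      (f (x + u + u + v) / f (x + u + u)) / (f (x + u + v) / f (x + u)) := by
    have : mixedDiff (fun x => Real.log (f x)) u v (x + u) =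
        (Real.log (f (x + u + u + v)) - Real.log (f (x + u + u))) -
          (Real.log (f (x + u + v)) - Real.log (f (x + u))) := by
      simp only [mixedDiff]; ring
    rw [this, Real.exp_sub, Real.exp_sub, Real.exp_sub]
    simp only [Real.exp_log, p2, p1, q2, q1]
  rw [e1, e2, ← add_div, le_div_iff₀ (by positivity)]
  linarith

/-- Convexity of `f (· + v) / f` and of its reciprocal, a translate of `f (· - v) / f`, make the
third difference quadratically small in the second differences. -/
lemma adjacent {E : Type*} [AddCommGroup E] [Module ℝ E] {f : E → ℝ}
    (hf : ∀ x, 0 < f x)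
    (hR : ∀ y, ConvexOn ℝ Set.univ fun x => f (x + y) / f x) (x u v : E)
    (h1 : |mixedDiff (fun x => Real.log (f x)) u v x| ≤ 1)
    (h2 : |mixedDiff (fun x => Real.log (f x)) u v (x + u)| ≤ 1) :
    |mixedDiff (fun x => Real.log (f x)) u v (x + u) -
      mixedDiff (fun x => Real.log (f x)) u v x| ≤
      mixedDiff (fun x => Real.log (f x)) u v x ^ 2 +
      mixedDiff (fun x => Real.log (f x)) u v (x + u) ^ 2 := by
  have a := midpoint_ratio hf hR x u v
  have b := midpoint_ratio hf hR (x + v) u (-v)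
  have e : ∀ z, mixedDiff (fun x => Real.log (f x)) u (-v) (z + v) =
      -mixedDiff (fun x => Real.log (f x)) u v z := by
    intro z
    have i1 : z + u + v + -v = z + u := by abel
    have i2 : z + v + -v = z := by abel
    have i3 : z + v + u = z + u + v := by abel
    simp only [mixedDiff, i3, i1, i2]; ring
  rw [add_right_comm x v u, e, e, neg_neg] at b
  generalize mixedDiff (fun x => Real.log (f x)) u v x = α at *
  generalize mixedDiff (fun x => Real.log (f x)) u v (x + u) = β at *
  have b1 := (abs_le.1 (Real.abs_exp_sub_one_sub_id_le h1)).2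
  have b2 := (abs_le.1 (Real.abs_exp_sub_one_sub_id_le h2)).2
  have b3 := (abs_le.1 (Real.abs_exp_sub_one_sub_id_le ((abs_neg α).trans_le h1))).2
  have b4 := (abs_le.1 (Real.abs_exp_sub_one_sub_id_le ((abs_neg β).trans_le h2))).2
  rw [neg_sq] at b3 b4
  rw [abs_le]
  constructor <;> linarith

/-- The third differences `Δ_v Δ_u²` of `log f` vanish. -/
lemma mixedDiff_eq {E : Type*} [NormedAddCommGroup E] [NormedSpace ℝ E] {f : E → ℝ}
    (hf : ∀ x, 0 < f x) (hc : Continuous f)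
    (hR : ∀ y, ConvexOn ℝ Set.univ fun x => f (x + y) / f x) (x u v : E) :
    mixedDiff (fun x => Real.log (f x)) u v (x + u) =
      mixedDiff (fun x => Real.log (f x)) u v x := by
  have hg : Continuous fun x => Real.log (f x) := hc.log fun x => (hf x).ne'
  have hadj := adjacent hf hR
  generalize (fun x => Real.log (f x)) = g at *
  set G : ℝ → ℝ → ℝ := fun s r => g (x + (2 * s) • u + (2 * r) • v) with hGdef
  have hcell : ∀ s r h l, cell G s r h l =
      mixedDiff g ((2 * h) • u) ((2 * l) • v) (x + (2 * s) • u + (2 * r) • v) := by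
    intro s r h l
    have i1 : x + (2 * (s + h)) • u + (2 * (r + l)) • v =
      x + (2 * s) • u + (2 * r) • v + (2 * h) • u + (2 * l) • v := by module
    have i2 : x + (2 * (s + h)) • u + (2 * r) • v =
      x + (2 * s) • u + (2 * r) • v + (2 * h) • u := by module
    have i3 : x + (2 * s) • u + (2 * (r + l)) • v =
      x + (2 * s) • u + (2 * r) • v + (2 * l) • v := by module
    simp only [cell, hGdef, mixedDiff, i1, i2, i3]
  have key := cell_eq G (by simp only [hGdef]; fun_prop) ?_ ?_
  · rw [hcell, hcell] at key
    convert key using 2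
    all_goals first | rfl | module
  · intro s r h l
    have e : x + (2 * (s + h)) • u + (2 * r) • v =
      x + (2 * s) • u + (2 * r) • v + (2 * h) • u := by module
    rw [hcell, hcell, e]
    exact hadj _ _ _
  · intro s r h l
    have e : x + (2 * s) • u + (2 * (r + l)) • v =
      x + (2 * s) • u + (2 * r) • v + (2 * l) • v := by module
    rw [hcell, hcell, e, mixedDiff_comm, mixedDiff_comm g _ _ (_ + (2 * l) • v)]
    exact hadj _ _ _

/-- A continuous function whose third differences `Δ_v Δ_u²` vanish is a quadratic polynomial. -/
lemma exists_quadratic {n : ℕ} {g : (Fin n → ℝ) → ℝ} (hg : Continuous g)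
    (hD : ∀ x u v, mixedDiff g u v (x + u) = mixedDiff g u v x) :
    ∃ (c : ℝ) (b : Fin n → ℝ) (M : Matrix (Fin n) (Fin n) ℝ), M.IsSymm ∧
      ∀ x, g x = c + b ⬝ᵥ x - 1 / 2 * (x ⬝ᵥ (M *ᵥ x)) := by
  have hadd : ∀ a b v, mixedDiff g (a + b) v 0 = mixedDiff g a v 0 + mixedDiff g b v 0 := by
    intro a b v
    -- both `0, a + b` and `a, b` have midpoint `(a + b) / 2`
    have h1 := hD 0 ((1 / 2 : ℝ) • (a + b)) v
    have h2 := hD a ((1 / 2 : ℝ) • (b - a)) v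
    have e1 : 0 + (1 / 2 : ℝ) • (a + b) + (1 / 2 : ℝ) • (a + b) = a + b := by module
    have e2 : a + (1 / 2 : ℝ) • (b - a) + (1 / 2 : ℝ) • (b - a) = b := by module
    have e3 : a + (1 / 2 : ℝ) • (b - a) = 0 + (1 / 2 : ℝ) • (a + b) := by module
    simp only [mixedDiff, e1] at h1
    simp only [mixedDiff, e2] at h2
    rw [e3] at h2
    simp only [mixedDiff, zero_add] at *
    linarith
  have hsmul : ∀ (r : ℝ) a v, mixedDiff g (r • a) v 0 = r • mixedDiff g a v 0 := by
    intro r a v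
    let φ : (Fin n → ℝ) →+ ℝ := AddMonoidHom.mk' (fun a => mixedDiff g a v 0) fun a b => hadd a b v
    exact map_real_smul φ (by simp only [φ, mixedDiff, AddMonoidHom.mk'_apply]; fun_prop) r a
  let B : (Fin n → ℝ) →ₗ[ℝ] (Fin n → ℝ) →ₗ[ℝ] ℝ :=
    LinearMap.mk₂ ℝ (fun a v => mixedDiff g a v 0) hadd hsmul
      (fun a b v => by
        rw [mixedDiff_comm, hadd, mixedDiff_comm g b, mixedDiff_comm g v])
      (fun r a v => by rw [mixedDiff_comm, hsmul, mixedDiff_comm])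
  have hB : ∀ a v, B a v = mixedDiff g a v 0 := fun a v => rfl
  -- subtracting the quadratic part leaves an additive function
  let ψ : (Fin n → ℝ) →+ ℝ := AddMonoidHom.mk' (fun a => g a - g 0 - 1 / 2 * B a a) (by
    intro a b
    have : B a b = B b a := by rw [hB, hB, mixedDiff_comm]
    simp only [map_add, LinearMap.add_apply, this]
    rw [hB b a, mixedDiff_comm]
    simp only [mixedDiff, zero_add]
    ring)
  have hψc : Continuous ψ := by
    change Continuous fun a => g a - g 0 - 1 / 2 * mixedDiff g a a 0
    simp only [mixedDiff]; fun_prop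
  let L : (Fin n → ℝ) →ₗ[ℝ] ℝ := (ψ.toRealLinearMap hψc).toLinearMap
  have hL : ∀ x, L x = g x - g 0 - 1 / 2 * B x x := fun x => rfl
  refine ⟨g 0, fun i => L (Pi.single i 1), -LinearMap.toMatrix₂' ℝ B, ?_, fun x => ?_⟩
  · ext i j
    simp [LinearMap.toMatrix₂'_apply, hB, mixedDiff_comm g (Pi.single i 1)]
  · have h1 : x ⬝ᵥ (LinearMap.toMatrix₂' ℝ B *ᵥ x) = B x x := by
      rw [← Matrix.toLinearMap₂'_apply' , Matrix.toLinearMap₂'_toMatrix']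
    have h2 : (fun i => L (Pi.single i 1)) ⬝ᵥ x = L x := by
      conv_rhs => rw [LinearMap.pi_apply_eq_sum_univ L x]
      refine Finset.sum_congr rfl fun i _ => ?_
      have : (Pi.single i 1 : Fin n → ℝ) = fun j => if i = j then 1 else 0 := by
        ext j; simp [Pi.single_apply, eq_comm]
      simp only [this, smul_eq_mul, mul_comm]
    rw [neg_mulVec, dotProduct_neg, h1, h2, hL]
    ring

/-! ### Integrability and normalization -/

/-- Integrating the convexity inequality for `f (· + y) / f` over `y` gives convexity of `1 / f`. -/
lemma convexOn_inv {n : ℕ} {f : (Fin n → ℝ) → ℝ} (hint : ∫ x, f x = 1)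
    (hR : ∀ y, ConvexOn ℝ Set.univ fun x => f (x + y) / f x) :
    ConvexOn ℝ Set.univ fun x => (f x)⁻¹ := by
  have hi : Integrable f := by
    by_contra h
    rw [integral_undef h] at hint
    exact zero_ne_one hint
  have hshift : ∀ x, Integrable fun y => f (x + y) / f x := fun x =>
    (hi.comp_add_left x).div_const _
  have hval : ∀ x, ∫ y, f (x + y) / f x = (f x)⁻¹ := fun x => by
    rw [integral_div, integral_add_left_eq_self f x, hint, one_div]
  refine ⟨convex_univ, fun x _ z _ a b ha hb hab => ?_⟩
  simp only [← hval, smul_eq_mul]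
  rw [← integral_const_mul, ← integral_const_mul,
    ← integral_add ((hshift x).const_mul a) ((hshift z).const_mul b)]
  exact integral_mono (hshift _) (((hshift x).const_mul a).add ((hshift z).const_mul b))
    fun y => (hR y).2 (Set.mem_univ x) (Set.mem_univ z) ha hb hab

lemma continuous_of_convexOn {n : ℕ} {f : (Fin n → ℝ) → ℝ} (hf : ∀ x, 0 < f x)
    (hint : ∫ x, f x = 1)
    (hR : ∀ y, ConvexOn ℝ Set.univ fun x => f (x + y) / f x) : Continuous f := by
  have h := (convexOn_inv hint hR).locallyLipschitz.continuous
  have : Continuous fun x => ((f x)⁻¹)⁻¹ := h.inv₀ fun x => (inv_pos.2 (hf x)).ne'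
  simpa only [inv_inv] using this

/-- An integrable continuous positive function cannot satisfy `2 f x ≤ f (x + k v) + f (x - k v)`
for all `x` and `k` when `v ≠ 0`: the mass of `f` near `± k v` tends to `0` as `k → ∞`. -/
lemma false_of_midpoint {n : ℕ} {f : (Fin n → ℝ) → ℝ} (hf : ∀ x, 0 < f x) (hc : Continuous f)
    (hi : Integrable f) {v : Fin n → ℝ} (hv : v ≠ 0)
    (h : ∀ x (k : ℕ), 2 * f x ≤ f (x + (k : ℝ) • v) + f (x - (k : ℝ) • v)) : False := by
  set K := Metric.closedBall (0 : Fin n → ℝ) 1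
  have hK : MeasurableSet K := Metric.isClosed_closedBall.measurableSet
  have hesc : ∀ w : Fin n → ℝ, w ≠ 0 → Filter.Tendsto
      (fun k : ℕ => ∫ x in K, f (x + (k : ℝ) • w)) Filter.atTop (nhds 0) := by
    intro w hw
    have e : ∀ k : ℕ, ∫ x in K, f (x + (k : ℝ) • w) =
        ∫ x, K.indicator (fun _ => (1 : ℝ)) (x - (k : ℝ) • w) * f x := by
      intro k
      rw [← integral_indicator hK, ← integral_sub_right_eq_self _ ((k : ℝ) • w)]
      congr 1 with x
      by_cases hx : x - (k : ℝ) • w ∈ K <;> simp [hx]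
    simp only [e]
    have z : (0 : ℝ) = ∫ _ : Fin n → ℝ, (0 : ℝ) := by simp
    rw [z]
    refine tendsto_integral_of_dominated_convergence f (fun k => ?_) hi (fun k => ?_) ?_
    · exact (((measurable_const.indicator hK).comp (measurable_id.sub_const _)).mul
        hc.measurable).aestronglyMeasurable
    · refine Filter.Eventually.of_forall fun x => ?_
      by_cases hx : x - (k : ℝ) • w ∈ K <;> simp [hx, (hf x).le, abs_of_pos (hf x)]
    · refine Filter.Eventually.of_forall fun x => ?_
      refine tendsto_const_nhds.congr' ?_
      have ht : Filter.Tendsto (fun k : ℕ => (k : ℝ) * ‖w‖) Filter.atTop Filter.atTop :=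
        tendsto_natCast_atTop_atTop.atTop_mul_const (norm_pos_iff.2 hw)
      filter_upwards [ht.eventually_gt_atTop (1 + ‖x‖)] with k hk
      have : x - (k : ℝ) • w ∉ K := by
        simp only [K, mem_closedBall_zero_iff, not_le]
        have h1 := norm_sub_norm_le ((k : ℝ) • w) x
        rw [norm_smul, Real.norm_natCast, norm_sub_rev] at h1
        linarith
      simp [this]
  have hsum := (hesc v hv).add (hesc (-v) (neg_ne_zero.2 hv))
  rw [add_zero] at hsum
  have hle : ∀ k : ℕ, ∫ x in K, 2 * f x ≤
      (∫ x in K, f (x + (k : ℝ) • v)) + ∫ x in K, f (x + (k : ℝ) • (-v)) := by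
    intro k
    have i1 := (hi.comp_add_right ((k : ℝ) • v)).integrableOn (s := K)
    have i2 := (hi.comp_add_right ((k : ℝ) • (-v))).integrableOn (s := K)
    rw [← integral_add i1 i2]
    refine integral_mono (hi.const_mul 2).integrableOn (i1.add i2) fun x => ?_
    simpa [sub_eq_add_neg] using h x k
  have h0 : ∫ x in K, 2 * f x ≤ 0 := ge_of_tendsto' hsum hle
  have hp : 0 < ∫ x in K, 2 * f x := by
    rw [setIntegral_pos_iff_support_of_nonneg_ae]
    · have : Function.support (fun x => 2 * f x) = Set.univ := by
        ext x; simp [(hf x).ne']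
      rw [this, Set.univ_inter]
      exact Metric.measure_closedBall_pos _ _ one_pos
    · exact Filter.Eventually.of_forall fun x => by simpa using (hf x).le
    · exact (hi.const_mul 2).integrableOn
  exact hp.not_ge h0

/-- Integrability of `exp (c + b ⬝ x - ½ x ⬝ M x)` forces `M` to be positive definite. -/
lemma posDef_of_integrable {n : ℕ} {f : (Fin n → ℝ) → ℝ} (hi : Integrable f) {c : ℝ}
    {b : Fin n → ℝ} {M : Matrix (Fin n) (Fin n) ℝ} (hM : M.IsSymm)
    (hfx : ∀ x, f x = Real.exp (c + b ⬝ᵥ x - 1 / 2 * (x ⬝ᵥ (M *ᵥ x)))) : M.PosDef := by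
  refine .of_dotProduct_mulVec_pos (by rwa [IsHermitian, conjTranspose_eq_transpose_of_trivial])
    fun v hv => ?_
  rw [star_trivial]
  by_contra! hneg
  have hfe : f = fun x => Real.exp (c + b ⬝ᵥ x - 1 / 2 * (x ⬝ᵥ (M *ᵥ x))) := funext hfx
  refine false_of_midpoint (fun x => by rw [hfx]; positivity) (by rw [hfe]; fun_prop) hi hv
    fun x k => ?_
  simp only [hfx]
  set w := (k : ℝ) • v with hw
  have hw0 : w ⬝ᵥ (M *ᵥ w) ≤ 0 := by
    simp only [hw, mulVec_smul, smul_dotProduct, dotProduct_smul, smul_eq_mul]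
    rw [← mul_assoc]
    exact mul_nonpos_of_nonneg_of_nonpos (by positivity) hneg
  set E := c + b ⬝ᵥ x - 1 / 2 * (x ⬝ᵥ (M *ᵥ x)) with hE
  set d := b ⬝ᵥ w - 1 / 2 * (x ⬝ᵥ (M *ᵥ w) + w ⬝ᵥ (M *ᵥ x)) with hd
  have e1 : E + d ≤ c + b ⬝ᵥ (x + w) - 1 / 2 * ((x + w) ⬝ᵥ (M *ᵥ (x + w))) := by
    simp only [mulVec_add, dotProduct_add, add_dotProduct, hE, hd]; linarith
  have e2 : E - d ≤ c + b ⬝ᵥ (x - w) - 1 / 2 * ((x - w) ⬝ᵥ (M *ᵥ (x - w))) := by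
    simp only [mulVec_sub, dotProduct_sub, sub_dotProduct, hE, hd]; linarith
  have f1 := Real.exp_le_exp.2 e1
  have f2 := Real.exp_le_exp.2 e2
  rw [Real.exp_add] at f1
  rw [sub_eq_add_neg, Real.exp_add] at f2
  have g1 := Real.add_one_le_exp d
  have g2 := Real.add_one_le_exp (-d)
  nlinarith [Real.exp_pos E]

/-- The Gaussian integral, by the change of variables `y = C x` where `M = Cᵀ C`. -/
lemma integral_exp_quadratic {n : ℕ} {M : Matrix (Fin n) (Fin n) ℝ} (hM : M.PosDef) :
    ∫ x : Fin n → ℝ, Real.exp (-((1 / 2) * (x ⬝ᵥ (M *ᵥ x)))) =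
      Real.sqrt ((2 * Real.pi) ^ n * (M⁻¹).det) := by
  obtain ⟨C, rfl⟩ : ∃ C : Matrix (Fin n) (Fin n) ℝ, M = Cᵀ * C := by
    open scoped MatrixOrder Matrix.Norms.L2Operator in
    obtain ⟨C, hC⟩ := CStarAlgebra.nonneg_iff_eq_star_mul_self.mp hM.posSemidef.nonneg
    exact ⟨C, by rwa [star_eq_conjTranspose, conjTranspose_eq_transpose_of_trivial] at hC⟩
  have hdet : (Cᵀ * C).det = C.det ^ 2 := by rw [det_mul, det_transpose, sq]
  have hC : C.det ≠ 0 := fun h => by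
    have := hM.det_pos
    rw [hdet, h] at this
    simp at this
  have hmap := Real.map_matrix_volume_pi_eq_smul_volume_pi hC
  have hg : ∫ y : Fin n → ℝ, Real.exp (-((1 / 2) * (y ⬝ᵥ y))) = Real.sqrt (2 * Real.pi) ^ n := by
    have e : ∀ y : Fin n → ℝ, Real.exp (-((1 / 2) * (y ⬝ᵥ y))) =
        ∏ i, Real.exp (-(1 / 2) * y i ^ 2) := by
      intro y
      rw [← Real.exp_sum, dotProduct, ← Finset.mul_sum, neg_mul]
      simp only [sq]
    simp only [e]
    rw [integral_fintype_prod_volume_eq_pow (fun t : ℝ => Real.exp (-(1 / 2) * t ^ 2)),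
      integral_gaussian, Fintype.card_fin]
    congr 2
    field_simp
  have e : ∀ x : Fin n → ℝ, x ⬝ᵥ ((Cᵀ * C) *ᵥ x) = toLin' C x ⬝ᵥ toLin' C x := by
    intro x
    rw [toLin'_apply, ← mulVec_mulVec, dotProduct_mulVec, vecMul_transpose]
  simp only [e]
  have hc : Continuous (toLin' C) := (toLin' C).continuous_of_finiteDimensional
  rw [← integral_map (φ := toLin' C) hc.measurable.aemeasurable
    (f := fun y => Real.exp (-((1 / 2) * (y ⬝ᵥ y)))) (by fun_prop), hmap, integral_smul_measure, hg,
    det_nonsing_inv, Ring.inverse_eq_inv', hdet, Real.sqrt_mul (by positivity) ((C.det ^ 2)⁻¹),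
    Real.sqrt_inv, Real.sqrt_sq_eq_abs, ENNReal.toReal_ofReal (abs_nonneg _), abs_inv,
    smul_eq_mul, mul_comm]
  congr 1
  refine ((Real.sqrt_eq_iff_mul_self_eq (by positivity) (by positivity)).2 ?_).symm
  rw [← sq]
  symm
  rw [← pow_mul, mul_comm n 2, pow_mul, Real.sq_sqrt (by positivity)]

/-- Completing the square: the mean is `M⁻¹ b` and the covariance `M⁻¹`. -/
lemma eq_gaussian {n : ℕ} {f : (Fin n → ℝ) → ℝ} (hint : ∫ x, f x = 1) {c : ℝ}
    {b : Fin n → ℝ} {M : Matrix (Fin n) (Fin n) ℝ} (hM : M.PosDef)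
    (hfx : ∀ x, f x = Real.exp (c + b ⬝ᵥ x - 1 / 2 * (x ⬝ᵥ (M *ᵥ x)))) (x : Fin n → ℝ) :
    f x = gaussianDensityFun (M⁻¹ *ᵥ b) M⁻¹ x := by
  have hu : IsUnit M.det := hM.det_pos.ne'.isUnit
  set μ := M⁻¹ *ᵥ b with hμ
  have hb : M *ᵥ μ = b := by rw [hμ, mulVec_mulVec, mul_nonsing_inv _ hu, one_mulVec]
  have hsymm : ∀ x y : Fin n → ℝ, x ⬝ᵥ (M *ᵥ y) = y ⬝ᵥ (M *ᵥ x) := by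
    intro x y
    have hT : Mᵀ = M := by simpa [conjTranspose_eq_transpose_of_trivial] using hM.isHermitian.eq
    rw [dotProduct_mulVec, ← mulVec_transpose, hT, dotProduct_comm]
  have hsq : ∀ x, f x = Real.exp (c + 1 / 2 * (μ ⬝ᵥ (M *ᵥ μ))) *
      Real.exp (-((1 / 2) * ((x - μ) ⬝ᵥ (M *ᵥ (x - μ))))) := by
    intro x
    rw [hfx, ← Real.exp_add]
    congr 1
    have h1 : b ⬝ᵥ x = x ⬝ᵥ (M *ᵥ μ) := by rw [hb, dotProduct_comm]
    simp only [mulVec_sub, dotProduct_sub, sub_dotProduct, h1, hsymm μ x]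
    ring
  have hI : Real.exp (c + 1 / 2 * (μ ⬝ᵥ (M *ᵥ μ))) * Real.sqrt ((2 * Real.pi) ^ n * (M⁻¹).det)
      = 1 := by
    have h1 : ∫ x, f x = ∫ x : Fin n → ℝ, Real.exp (c + 1 / 2 * (μ ⬝ᵥ (M *ᵥ μ))) *
        Real.exp (-((1 / 2) * ((x - μ) ⬝ᵥ (M *ᵥ (x - μ))))) := by simp only [← hsq]
    rw [integral_sub_right_eq_self (fun x => Real.exp (c + 1 / 2 * (μ ⬝ᵥ (M *ᵥ μ))) *
        Real.exp (-((1 / 2) * (x ⬝ᵥ (M *ᵥ x))))) μ, integral_const_mul,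
      integral_exp_quadratic hM, hint] at h1
    exact h1.symm
  rw [gaussianDensityFun, nonsing_inv_nonsing_inv _ hu, hsq, eq_inv_of_mul_eq_one_left hI]

/-- A likelihood ratio of translates of a normal density is the exponential of an affine
function. -/
lemma convexOn_gaussian_ratio {n : ℕ} (μ : Fin n → ℝ) {S : Matrix (Fin n) (Fin n) ℝ}
    (hS : S.PosDef) (a b : Fin n → ℝ) :
    ConvexOn ℝ Set.univ
      fun x => gaussianDensityFun μ S (x - b) / gaussianDensityFun μ S (x - a) := by
  have hK : 0 < (Real.sqrt ((2 * Real.pi) ^ n * S.det))⁻¹ := by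
    have := hS.det_pos
    positivity
  set l : (Fin n → ℝ) → ℝ := fun x =>
    1 / 2 * ((x - a - μ) ⬝ᵥ (S⁻¹ *ᵥ (x - a - μ))) -
      1 / 2 * ((x - b - μ) ⬝ᵥ (S⁻¹ *ᵥ (x - b - μ))) with hl
  have e : (fun x => gaussianDensityFun μ S (x - b) / gaussianDensityFun μ S (x - a)) =
      fun x => Real.exp (l x) := by
    funext x
    rw [gaussianDensityFun, gaussianDensityFun, mul_div_mul_left _ _ hK.ne', ← Real.exp_sub]
    congr 1
    rw [hl]; ring
  rw [e]
  refine ⟨convex_univ, fun x _ y _ s t hs ht hst => ?_⟩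
  have haff : l (s • x + t • y) = s * l x + t * l y := by
    obtain rfl : t = 1 - s := by linarith
    simp only [hl, mulVec_sub, mulVec_add, mulVec_smul, dotProduct_sub, sub_dotProduct,
      dotProduct_add, add_dotProduct, dotProduct_smul, smul_dotProduct, smul_eq_mul]
    ring
  simp only [haff]
  exact convexOn_exp.2 (Set.mem_univ (l x)) (Set.mem_univ (l y)) hs ht hst

theorem stmt19 {n : ℕ} (f : (Fin n → ℝ) → ℝ)
    (hmeas : Measurable f) (hpos : ∀ x, 0 < f x)
    (hint : ∫ x, f x = 1) :
    (∀ θ₀ θ₁ : Fin n → ℝ,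
        ConvexOn ℝ Set.univ (fun x => f (x - θ₁) / f (x - θ₀))) ↔
      ∃ (μ : Fin n → ℝ) (S : Matrix (Fin n) (Fin n) ℝ),
        S.PosDef ∧ ∀ x, f x = gaussianDensityFun μ S x := by
  constructor
  · intro h
    have hR : ∀ y, ConvexOn ℝ Set.univ fun x => f (x + y) / f x := fun y => by
      simpa using h 0 (-y)
    have hc := continuous_of_convexOn hpos hint hR
    obtain ⟨c, b, M, hM, hq⟩ := exists_quadratic (hc.log fun x => (hpos x).ne')
      (mixedDiff_eq hpos hc hR)
    have hfx : ∀ x, f x = Real.exp (c + b ⬝ᵥ x - 1 / 2 * (x ⬝ᵥ (M *ᵥ x))) := fun x => by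
      rw [← hq, Real.exp_log (hpos x)]
    have hi : Integrable f := by
      by_contra hni
      rw [integral_undef hni] at hint
      exact zero_ne_one hint
    have hP := posDef_of_integrable hi hM hfx
    exact ⟨M⁻¹ *ᵥ b, M⁻¹, hP.inv, eq_gaussian hint hP hfx⟩
  · rintro ⟨μ, S, hS, hf⟩ θ₀ θ₁
    simp only [hf]
    exact convexOn_gaussian_ratio μ hS θ₀ θ₁
end
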